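/- arXiv:1103.0039 — 5 statements merged into one kernel-verified Lean document; each statement's English description precedes it below -/
import Mathlib

section
/- Under the Frobenius setup, the permutation polytope P(G) is two-level. -/
/-!
The kernel `N` acts regularly: it acts freely and `|N| = n`. Hence for every `g` the matrices
`M(g u)`, `u ∈ N`, have disjoint supports and add up to the all-ones matrix. Taking traces over a
coset `g N ≠ N`, whose `n` elements each fix at least one point, shows that every element of
`G \ N` fixes *exactly* one point.

Let `F` be a facet, cut out by `c` with maximum `m`. The key claim is that each coset `g N` has at
most one element with `c (M(g)) < m`. If `a ≠ b` were two such elements, consider the functional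
`d(X) = ∑ i, (X i (a i) - X i (b i))`. Its value at `M(g)` is the number of agreements of `g` with
`a` minus that with `b`; by the fixed-point count it is `n` at `a`, `-n` at `b`, and `0` at every
other element of `G`. So `d` vanishes on `F`, and as `F` has codimension one, `d` is proportional
to `c - m` on `P`; but `c - m` is negative at both `a` and `b`, while `d` has opposite signs there.

Given the claim, an element `g` with `c (M(g)) < m` satisfies
`c (M(g)) + (n - 1) m = ∑ u ∈ N, c (M(g u)) = c (J)` with `J` the all-ones matrix, so
`c (M(g)) = c (J) - (n - 1) m` does not depend on the coset.
-/

/-- The permutation matrix of a permutation `g` of `Fin n`. -/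
noncomputable def permMatrix (n : ℕ) (g : Equiv.Perm (Fin n)) :
    Matrix (Fin n) (Fin n) ℝ :=
  Matrix.of fun i j => if g i = j then (1 : ℝ) else 0

/-- The permutation polytope of a set of permutations. -/
noncomputable def permPolytope (n : ℕ) (G : Set (Equiv.Perm (Fin n))) :
    Set (Matrix (Fin n) (Fin n) ℝ) :=
  convexHull ℝ (permMatrix n '' G)

/-- The dimension of a polytope: the dimension of its affine span. -/
noncomputable def polytopeDim {E : Type*} [AddCommGroup E] [Module ℝ E] (P : Set E) : ℕ :=
  Module.finrank ℝ (affineSpan ℝ P).direction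

/-- `F` is a facet of `P`: `F` is the set of maximizers in `P` of some linear functional
that is non-constant on `P`, and the affine span of `F` has dimension `dim P − 1`. -/
def IsFacet {E : Type*} [AddCommGroup E] [Module ℝ E] (P F : Set E) : Prop :=
  (∃ c : E →ₗ[ℝ] ℝ, (∃ x ∈ P, ∃ y ∈ P, c x ≠ c y)
      ∧ F = {x ∈ P | ∀ y ∈ P, c y ≤ c x})
  ∧ polytopeDim F + 1 = polytopeDim P

/-- `P` is two-level: for every facet `F` of `P` there are a linear functional `c` and
reals `α, β` with `F = {x ∈ P : c x = α}` and every vertex (extreme point) `v` of `P`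
satisfies `c v = α` or `c v = β`. -/
def IsTwoLevel {E : Type*} [AddCommGroup E] [Module ℝ E] (P : Set E) : Prop :=
  ∀ F : Set E, IsFacet P F →
    ∃ (c : E →ₗ[ℝ] ℝ) (α β : ℝ),
      F = {x ∈ P | c x = α}
      ∧ ∀ v ∈ Set.extremePoints ℝ P, c v = α ∨ c v = β

section FrobeniusKernel

variable {n : ℕ} {G N : Subgroup (Equiv.Perm (Fin n))}

/-- Regularity of the kernel, translated by `g`. -/
lemma existsUnique_kernel
    (hNdef : (N : Set (Equiv.Perm (Fin n)))
      = {1} ∪ {g | g ∈ G ∧ ∀ i : Fin n, g i ≠ i})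
    (hNcard : Nat.card N = n) (g : Equiv.Perm (Fin n)) (i j : Fin n) :
    ∃! u : N, (g * u) i = j := by
  have hinj : Function.Injective (fun u : N => (u : Equiv.Perm (Fin n)) i) := by
    intro u v huv
    have hmem : ((v⁻¹ * u : N) : Equiv.Perm (Fin n)) ∈ (N : Set (Equiv.Perm (Fin n))) :=
      (v⁻¹ * u).2
    rw [hNdef] at hmem
    rcases hmem with h1 | ⟨-, h2⟩
    · have h3 : v⁻¹ * u = 1 := Subtype.ext h1
      exact (inv_mul_eq_one.mp h3).symm
    · refine absurd ?_ (h2 i)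
      have huv' : (u : Equiv.Perm (Fin n)) i = (v : Equiv.Perm (Fin n)) i := huv
      simp [Equiv.Perm.mul_apply, huv']
  have hbij : Function.Bijective (fun u : N => (u : Equiv.Perm (Fin n)) i) :=
    hinj.bijective_of_nat_card_le (by simp [hNcard])
  obtain ⟨u, hu, huniq⟩ := hbij.existsUnique (g⁻¹ j)
  refine ⟨u, ?_, fun v hv => huniq v ?_⟩
  · have hu' : (u : Equiv.Perm (Fin n)) i = g⁻¹ j := hu
    simp [Equiv.Perm.mul_apply, hu']
  · have hv' : g ((v : Equiv.Perm (Fin n)) i) = j := hv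
    simp [← hv']

/-- The permutation matrices of a left coset of the kernel add up to the all-ones matrix. -/
lemma sum_permMatrix_coset [Fintype N]
    (hNdef : (N : Set (Equiv.Perm (Fin n)))
      = {1} ∪ {g | g ∈ G ∧ ∀ i : Fin n, g i ≠ i})
    (hNcard : Nat.card N = n) (g : Equiv.Perm (Fin n)) :
    ∑ u : N, permMatrix n (g * u) = Matrix.of fun _ _ => (1 : ℝ) := by
  ext i j
  obtain ⟨u, hu, huniq⟩ := existsUnique_kernel hNdef hNcard g i j
  rw [Matrix.sum_apply, Finset.sum_eq_single u]
  · simp only [permMatrix, Matrix.of_apply]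
    exact if_pos hu
  · intro v _ hv
    simp only [permMatrix, Matrix.of_apply]
    exact if_neg fun h => hv (huniq v h)
  · simp

/-- An element of `G` outside the kernel has exactly one fixed point, counted as a trace. -/
lemma trace_permMatrix_of_notMem (hNG : N ≤ G)
    (hNdef : (N : Set (Equiv.Perm (Fin n)))
      = {1} ∪ {g | g ∈ G ∧ ∀ i : Fin n, g i ≠ i})
    (hNcard : Nat.card N = n) {g : Equiv.Perm (Fin n)} (hg : g ∈ G) (hgN : g ∉ N) :
    (permMatrix n g).trace = 1 := by
  classical
  have : Fintype N := Fintype.ofFinite N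
  have hge : ∀ u : N, 1 ≤ (permMatrix n (g * u)).trace := by
    intro u
    have hnot : g * u ∉ (N : Set (Equiv.Perm (Fin n))) := fun h =>
      hgN ((Subgroup.mul_mem_cancel_right N u.2).mp h)
    have hmem : g * u ∈ G := G.mul_mem hg (hNG u.2)
    rw [hNdef] at hnot
    obtain ⟨i, hi⟩ : ∃ i, (g * u) i = i := by
      by_contra hcon
      push Not at hcon
      exact hnot (Or.inr ⟨hmem, hcon⟩)
    have hle := Finset.single_le_sum (f := fun i => permMatrix n (g * u) i i) (s := Finset.univ)
      (fun k _ => by simp only [permMatrix, Matrix.of_apply]; split_ifs <;> norm_num)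
      (Finset.mem_univ i)
    have hone : permMatrix n (g * u) i i = 1 := by
      simp only [permMatrix, Matrix.of_apply]
      exact if_pos hi
    simp only [hone] at hle
    exact hle
  have hsum : ∑ u : N, (permMatrix n (g * u)).trace = ∑ _u : N, (1 : ℝ) := by
    rw [← Matrix.trace_sum, sum_permMatrix_coset hNdef hNcard g]
    have hcard : Fintype.card N = n := by rw [← Nat.card_eq_fintype_card, hNcard]
    simp [Matrix.trace, hcard]
  have h := (Finset.sum_eq_sum_iff_of_le (fun u _ => hge u)).mp hsum.symm 1 (Finset.mem_univ _)
  simpa using h.symm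

/-- The number of agreements of `X` with the permutation `a`, as a linear functional:
`X ↦ ∑ i, X i (a i)`. -/
noncomputable def agreement (n : ℕ) (a : Equiv.Perm (Fin n)) :
    Matrix (Fin n) (Fin n) ℝ →ₗ[ℝ] ℝ where
  toFun X := ∑ i, X i (a i)
  map_add' X Y := by simp [Finset.sum_add_distrib]
  map_smul' r X := by simp [Finset.mul_sum]

lemma agreement_permMatrix (a g : Equiv.Perm (Fin n)) :
    agreement n a (permMatrix n g) = (permMatrix n (a⁻¹ * g)).trace := by
  simp only [agreement, Matrix.trace, permMatrix, LinearMap.coe_mk, AddHom.coe_mk,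
    Matrix.of_apply, Matrix.diag_apply, Equiv.Perm.mul_apply, Equiv.Perm.inv_eq_iff_eq]

lemma trace_permMatrix_one : (permMatrix n 1).trace = n := by
  simp [Matrix.trace, permMatrix]

lemma trace_permMatrix_of_mem
    (hNdef : (N : Set (Equiv.Perm (Fin n)))
      = {1} ∪ {g | g ∈ G ∧ ∀ i : Fin n, g i ≠ i})
    {g : Equiv.Perm (Fin n)} (hg : g ∈ N) (hg1 : g ≠ 1) : (permMatrix n g).trace = 0 := by
  have hg' : g ∈ (N : Set (Equiv.Perm (Fin n))) := hg
  rw [hNdef] at hg'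
  rcases hg' with h | ⟨-, h⟩
  · exact absurd h hg1
  · simp [Matrix.trace, permMatrix, h]

/-- The functional `agreement a - agreement b`, for `a ≠ b` in one coset of the kernel, separates
`a` from `b` and vanishes at all other elements of `G`. -/
lemma agreement_eq_agreement (hNG : N ≤ G)
    (hNdef : (N : Set (Equiv.Perm (Fin n)))
      = {1} ∪ {g | g ∈ G ∧ ∀ i : Fin n, g i ≠ i})
    (hNcard : Nat.card N = n) {a b g : Equiv.Perm (Fin n)} (ha : a ∈ G) (hab : a⁻¹ * b ∈ N)
    (hg : g ∈ G) (hga : g ≠ a) (hgb : g ≠ b) :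
    agreement n a (permMatrix n g) = agreement n b (permMatrix n g) := by
  have hb : b ∈ G := (G.mul_mem_cancel_left (G.inv_mem ha)).mp (hNG hab)
  have hiff : a⁻¹ * g ∈ N ↔ b⁻¹ * g ∈ N := by
    rw [show a⁻¹ * g = (a⁻¹ * b) * (b⁻¹ * g) by group]
    exact N.mul_mem_cancel_left hab
  rw [agreement_permMatrix, agreement_permMatrix]
  by_cases h : a⁻¹ * g ∈ N
  · rw [trace_permMatrix_of_mem hNdef h fun h => hga (inv_mul_eq_one.mp h).symm,
      trace_permMatrix_of_mem hNdef (hiff.mp h) fun h => hgb (inv_mul_eq_one.mp h).symm]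
  · rw [trace_permMatrix_of_notMem hNG hNdef hNcard (G.mul_mem (G.inv_mem ha) hg) h,
      trace_permMatrix_of_notMem hNG hNdef hNcard (G.mul_mem (G.inv_mem hb) hg)
        (fun h' => h (hiff.mpr h'))]

end FrobeniusKernel

/-- A functional that vanishes on a facet cannot take opposite signs at two points off the
facet. -/
lemma not_opposite_signs {E : Type*} [AddCommGroup E] [Module ℝ E] [FiniteDimensional ℝ E]
    {P F : Set E} {c d : E →ₗ[ℝ] ℝ} {m : ℝ} (hFP : F ⊆ P) (hcF : ∀ x ∈ F, c x = m)
    (hdim : polytopeDim F + 1 = polytopeDim P) (hdF : ∀ x ∈ F, d x = 0)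
    {x a b : E} (hx : x ∈ F) (ha : a ∈ P) (hb : b ∈ P) (hca : c a < m) (hcb : c b < m)
    (hda : 0 < d a) (hdb : d b < 0) : False := by
  have hker : ∀ (e : E →ₗ[ℝ] ℝ) (t : ℝ), (∀ y ∈ F, e y = t) →
      (affineSpan ℝ F).direction ≤ LinearMap.ker e := by
    intro e t he
    rw [direction_affineSpan, vectorSpan_def, Submodule.span_le]
    rintro _ ⟨y, hy, z, hz, rfl⟩
    simp [he y hy, he z hz]
  have hmem : ∀ y ∈ P, x - y ∈ (affineSpan ℝ P).direction := by
    intro y hy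
    rw [direction_affineSpan]
    exact vsub_mem_vectorSpan ℝ (hFP hx) hy
  have hle : (affineSpan ℝ F).direction ≤ (affineSpan ℝ P).direction ⊓ LinearMap.ker c :=
    le_inf (AffineSubspace.direction_le (affineSpan_mono ℝ hFP)) (hker c m hcF)
  have hlt : (affineSpan ℝ P).direction ⊓ LinearMap.ker c < (affineSpan ℝ P).direction := by
    refine lt_of_le_of_ne inf_le_left fun h => ?_
    have h1 : c (x - a) = 0 := (inf_eq_left.mp h) (hmem a ha)
    rw [map_sub, hcF x hx] at h1
    linarith
  have heq : (affineSpan ℝ F).direction = (affineSpan ℝ P).direction ⊓ LinearMap.ker c := by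
    refine Submodule.eq_of_le_of_finrank_le hle ?_
    have := Submodule.finrank_lt_finrank_of_lt hlt
    unfold polytopeDim at hdim
    omega
  -- The combination of `x - a` and `x - b` killed by `c` is parallel to `F`, hence killed by `d`.
  have hv : (m - c b) • (x - a) - (m - c a) • (x - b) ∈ (affineSpan ℝ F).direction := by
    rw [heq]
    refine ⟨Submodule.sub_mem _ (Submodule.smul_mem _ _ (hmem a ha))
      (Submodule.smul_mem _ _ (hmem b hb)), ?_⟩
    simp only [SetLike.mem_coe, LinearMap.mem_ker, map_sub, map_smul, hcF x hx, smul_eq_mul]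
    ring
  have hd : d ((m - c b) • (x - a) - (m - c a) • (x - b)) = 0 := hker d 0 hdF hv
  simp only [map_sub, map_smul, hdF x hx, smul_eq_mul] at hd
  nlinarith [mul_pos (sub_pos.mpr hcb) hda, mul_pos (sub_pos.mpr hca) (neg_pos.mpr hdb)]

/-- Frobenius setup: the permutation polytope of a Frobenius group is two-level. -/
theorem frobenius_polytope_twoLevel (n : ℕ) (G H N : Subgroup (Equiv.Perm (Fin n)))
    (hHG : H ≤ G) (hNG : N ≤ G)
    (hHnontriv : H ≠ ⊥) (hHproper : H ≠ G)
    (hFrob : ∀ x ∈ G, x ∉ H → ∀ g ∈ H, x⁻¹ * g * x ∈ H → g = 1)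
    (hNdef : (N : Set (Equiv.Perm (Fin n)))
      = {1} ∪ {g | g ∈ G ∧ ∀ i : Fin n, g i ≠ i})
    (hNcard : Nat.card N = n)
    (hNH : N ⊓ H = ⊥)
    (hNHprod : ∀ g ∈ G, ∃ u ∈ N, ∃ h ∈ H, g = u * h) :
    IsTwoLevel (permPolytope n (G : Set (Equiv.Perm (Fin n)))) := by
  classical
  rintro F ⟨⟨c, ⟨-, -⟩, hF⟩, hdim⟩
  have : Fintype N := Fintype.ofFinite N
  have hvert : ∀ g ∈ G, permMatrix n g ∈ permPolytope n (G : Set (Equiv.Perm (Fin n))) :=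
    fun g hg => subset_convexHull ℝ _ ⟨g, hg, rfl⟩
  obtain ⟨g₀, hg₀, hmax⟩ := Set.exists_max_image (G : Set (Equiv.Perm (Fin n)))
    (fun g => c (permMatrix n g)) (Set.toFinite _) ⟨1, G.one_mem⟩
  set m := c (permMatrix n g₀) with hm
  have hPle : ∀ y ∈ permPolytope n (G : Set (Equiv.Perm (Fin n))), c y ≤ m := by
    have hsub : permPolytope n (G : Set (Equiv.Perm (Fin n))) ⊆ {y | c y ≤ m} := by
      refine convexHull_min ?_ (convex_halfSpace_le c.isLinear m)
      rintro _ ⟨g, hg, rfl⟩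
      exact hmax g hg
    exact fun y hy => hsub hy
  have hF' : F = {x ∈ permPolytope n (G : Set (Equiv.Perm (Fin n))) | c x = m} := by
    rw [hF]
    ext x
    constructor
    · rintro ⟨hx, hxm⟩
      exact ⟨hx, le_antisymm (hPle x hx) (hxm _ (hvert g₀ hg₀))⟩
    · rintro ⟨hx, hxm⟩
      exact ⟨hx, fun y hy => (hPle y hy).trans hxm.ge⟩
  have hx₀ : permMatrix n g₀ ∈ F := by
    rw [hF']
    exact ⟨hvert g₀ hg₀, rfl⟩
  have hFP : F ⊆ permPolytope n (G : Set (Equiv.Perm (Fin n))) := by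
    rw [hF']
    exact fun x hx => hx.1
  have hcF : ∀ x ∈ F, c x = m := by
    rw [hF']
    exact fun x hx => hx.2
  have hkey : ∀ a ∈ G, ∀ u : N, u ≠ 1 → c (permMatrix n a) < m →
      c (permMatrix n (a * u)) = m := by
    intro a ha u hu hlt
    by_contra hne
    have hb : a * u ∈ G := G.mul_mem ha (hNG u.2)
    have hu' : (u : Equiv.Perm (Fin n)) ≠ 1 := fun h => hu (Subtype.ext h)
    have hlt' : c (permMatrix n (a * u)) < m := lt_of_le_of_ne (hmax _ hb) hne
    have hn : (0 : ℝ) < n := by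
      rw [← hNcard]
      exact_mod_cast Nat.card_pos
    have hdG : ∀ g ∈ G, c (permMatrix n g) = m →
        (agreement n a - agreement n (a * u)) (permMatrix n g) = 0 := by
      intro g hg hgm
      rw [LinearMap.sub_apply, sub_eq_zero]
      refine agreement_eq_agreement hNG hNdef hNcard ha (by simp) hg ?_ ?_
      · rintro rfl
        exact hlt.ne hgm
      · rintro rfl
        exact hlt'.ne hgm
    have hda : (agreement n a - agreement n (a * u)) (permMatrix n a) = n := by
      rw [LinearMap.sub_apply, agreement_permMatrix, agreement_permMatrix, inv_mul_cancel,
        trace_permMatrix_one, trace_permMatrix_of_mem hNdef (g := (a * u)⁻¹ * a) (by simp)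
          (by simpa using hu'), sub_zero]
    have hdb : (agreement n a - agreement n (a * u)) (permMatrix n (a * u)) = -n := by
      rw [LinearMap.sub_apply, agreement_permMatrix, agreement_permMatrix, inv_mul_cancel,
        trace_permMatrix_one, trace_permMatrix_of_mem hNdef (g := a⁻¹ * (a * u)) (by simp)
          (by simpa using hu'), zero_sub]
    -- `d` is dominated by a multiple of `m - c` at the vertices, hence on all of `P`.
    have hdF : ∀ x ∈ F, (agreement n a - agreement n (a * u)) x = 0 := by
      set d := agreement n a - agreement n (a * u) with hd
      have hdom : ∀ e : Matrix (Fin n) (Fin n) ℝ →ₗ[ℝ] ℝ,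
          (∀ g ∈ G, c (permMatrix n g) = m → e (permMatrix n g) = 0) → ∀ x ∈ F, e x ≤ 0 := by
        intro e he x hx
        obtain ⟨K, hK⟩ := ((Set.toFinite (G : Set (Equiv.Perm (Fin n)))).image
          (fun g => e (permMatrix n g) / (m - c (permMatrix n g)))).bddAbove
        have hsub : permPolytope n (G : Set (Equiv.Perm (Fin n))) ⊆
            {y | (e + K • c) y ≤ K * m} := by
          refine convexHull_min ?_ (convex_halfSpace_le (e + K • c).isLinear _)
          rintro _ ⟨g, hg, rfl⟩
          simp only [Set.mem_ofPred_eq, LinearMap.add_apply, LinearMap.smul_apply, smul_eq_mul]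
          rcases (hmax g hg).eq_or_lt with h | h
          · have h' : c (permMatrix n g) = m := h
            rw [he g hg h', h', zero_add]
          · have h' : c (permMatrix n g) < m := h
            have h2 := hK ⟨g, hg, rfl⟩
            have h3 := (div_le_iff₀ (sub_pos.mpr h')).mp h2
            linarith
        have h4 := hsub (hFP hx)
        simp only [Set.mem_ofPred_eq, LinearMap.add_apply, LinearMap.smul_apply, smul_eq_mul,
          hcF x hx] at h4
        linarith
      intro x hx
      refine le_antisymm (hdom d hdG x hx) ?_
      have h5 := hdom (-d) (fun g hg hgm => by simp [hdG g hg hgm]) x hx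
      simpa using h5
    exact not_opposite_signs hFP hcF hdim hdF hx₀ (hvert a ha) (hvert _ hb) hlt hlt'
      (by rw [hda]; exact hn) (by rw [hdb]; linarith)
  refine ⟨c, m, c (Matrix.of fun _ _ => (1 : ℝ)) - (n - 1) * m, hF', ?_⟩
  intro v hv
  obtain ⟨g, hg, rfl⟩ := extremePoints_convexHull_subset hv
  rcases (hmax g hg).eq_or_lt with h | h
  · exact Or.inl h
  · right
    have hsum : ∑ u : N, c (permMatrix n (g * u)) = c (Matrix.of fun _ _ => (1 : ℝ)) := by
      rw [← map_sum, sum_permMatrix_coset hNdef hNcard g]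
    have hcard : ((Finset.univ.erase (1 : N)).card : ℝ) = n - 1 := by
      rw [Finset.card_erase_of_mem (Finset.mem_univ _), Finset.card_univ,
        ← Nat.card_eq_fintype_card, Nat.cast_sub Nat.card_pos, hNcard, Nat.cast_one]
    rw [← Finset.add_sum_erase _ _ (Finset.mem_univ (1 : N)),
      Finset.sum_congr rfl fun u hu => hkey g hg u (Finset.ne_of_mem_erase hu) h,
      Finset.sum_const, nsmul_eq_mul, hcard] at hsum
    rw [OneMemClass.coe_one, mul_one] at hsum
    linarith
end

section
/- Let G be a finite set of permutations of Fin n such that each matrix M(g), g ∈ G, is a vertex (extreme point) of the permutation polytope P(G). Then P(G) is two-level if and only if for every subset J ⊆ G such that the convex hull of {M(g) : g ∈ J} is a facet of P(G), every function λ : G → ℝ with Σ_{g ∈ G} λ(g)·M(g) = 0 satisfies Σ_{g ∉ J} λ(g) = 0. -/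
/-!
Write `M g` for the permutation matrix of `g`. A face of `conv (M '' G)` is the convex hull of the
`M g` it contains (`mem_convexHull_of_le_of_eq`), and since every `M g` is a vertex, a facet `F`
and the set `J = {g ∈ G | M g ∈ F}` determine each other.

If `P(G)` is two-level, with `F = {c = α}` and `c = β` at the remaining vertices, apply `c` to
a dependence `∑ λ g • M g = 0`. The entries in any fixed row of a permutation matrix sum to `1`, so
`∑ λ g = 0`, and what remains is `(β - α) * ∑_{g ∉ J} λ g = 0` with `β ≠ α` unless `J = G`.

Conversely, if `λ ↦ ∑_{g ∉ J} λ g` vanishes on the kernel of `λ ↦ ∑ λ g • M g`, it factors through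
that map by linear algebra duality: there is a functional `c` with `c (M g) = 0` on `J` and
`c (M g) = 1` off `J`. This `c` cuts out `F` and takes only the values `0` and `1` on vertices.
-/

open scoped BigOperators

/-- The face of `conv S` on which a functional bounded by `m` on `S` attains `m` is spanned by the
points of `S` where it attains `m`. -/
lemma mem_convexHull_of_le_of_eq {E : Type*} [AddCommGroup E] [Module ℝ E] {S : Set E}
    (f : E →ₗ[ℝ] ℝ) (m : ℝ) (hS : ∀ s ∈ S, f s ≤ m) {x : E}
    (hx : x ∈ convexHull ℝ S) (hfx : f x = m) :
    x ∈ convexHull ℝ {s ∈ S | f s = m} := by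
  -- The property below is convex in `x` and holds on `S`.
  have key : convexHull ℝ S ⊆
      {x | f x ≤ m ∧ (f x = m → x ∈ convexHull ℝ {s ∈ S | f s = m})} := by
    refine convexHull_min (fun s hs => ⟨hS s hs, fun h => subset_convexHull ℝ _ ⟨hs, h⟩⟩) ?_
    rintro x ⟨hx, hx'⟩ y ⟨hy, hy'⟩ a b ha hb hab
    have hf : f (a • x + b • y) = a * f x + b * f y := by simp
    have hm : m = a * m + b * m := by rw [← add_mul, hab, one_mul]
    have hax := mul_le_mul_of_nonneg_left hx ha
    have hby := mul_le_mul_of_nonneg_left hy hb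
    refine ⟨by linarith, fun h => ?_⟩
    rw [hf] at h
    rcases ha.eq_or_lt with rfl | ha'
    · obtain rfl : b = 1 := by linarith
      simpa using hy' (by linarith)
    rcases hb.eq_or_lt with rfl | hb'
    · obtain rfl : a = 1 := by linarith
      simpa using hx' (by linarith)
    obtain rfl : b = 1 - a := by linarith
    exact convex_convexHull ℝ _ (hx' (by nlinarith)) (hy' (by nlinarith)) ha hb hab
  exact (key hx).2 hfx

lemma permMatrix_injective (n : ℕ) : Function.Injective (permMatrix n) := by
  intro g h hgh
  ext i
  have := congrFun (congrFun hgh i) (g i)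
  by_contra hne
  have hne' : ¬ h i = g i := fun h' => hne (by rw [h'])
  simp [permMatrix, hne'] at this

lemma sum_eq_zero_of_sum_smul_permMatrix {n : ℕ} (i : Fin n) (G : Finset (Equiv.Perm (Fin n)))
    (lam : Equiv.Perm (Fin n) → ℝ) (h : ∑ g ∈ G, lam g • permMatrix n g = 0) :
    ∑ g ∈ G, lam g = 0 := by
  -- Sum the entries of row `i`.
  have h1 : ∑ j, (∑ g ∈ G, lam g • permMatrix n g) i j = 0 := by simp [h]
  simp only [Matrix.sum_apply, Matrix.smul_apply] at h1
  rw [Finset.sum_comm] at h1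
  simpa [permMatrix] using h1

/-- A functional on the coefficient space that kills every dependence of the family `M` on `G`
comes from a functional on the ambient space. -/
lemma exists_functional_of_dependences {ι E : Type*} [DecidableEq ι] [AddCommGroup E] [Module ℝ E]
    (M : ι → E) (G K : Finset ι)
    (h : ∀ lam : ι → ℝ, ∑ g ∈ G, lam g • M g = 0 → ∑ g ∈ K, lam g = 0) :
    ∃ c : E →ₗ[ℝ] ℝ, ∀ g ∈ G, c (M g) = if g ∈ K then 1 else 0 := by
  let L : (ι → ℝ) →ₗ[ℝ] E := ∑ g ∈ G, (LinearMap.proj g : (ι → ℝ) →ₗ[ℝ] ℝ).smulRight (M g)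
  let φ : (ι → ℝ) →ₗ[ℝ] ℝ := ∑ g ∈ K, LinearMap.proj g
  have hmem : φ ∈ LinearMap.range L.dualMap := by
    rw [LinearMap.range_dualMap_eq_dualAnnihilator_ker, Submodule.mem_dualAnnihilator]
    intro lam hlam
    have := h lam (by simpa [L] using hlam)
    simpa [φ] using this
  obtain ⟨c, hc⟩ := hmem
  refine ⟨c, fun g hg => ?_⟩
  have := LinearMap.congr_fun hc (Pi.single g 1)
  simpa [L, φ, Pi.single_apply, hg, ite_smul] using this

/-- Gale-dual characterization of two-level permutation polytopes: `P(G)` is two-level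
iff for every `J ⊆ G` whose matrices span a facet of `P(G)`, every linear dependence
`Σ_{g ∈ G} λ(g) M(g) = 0` satisfies `Σ_{g ∈ G∖J} λ(g) = 0`. -/
theorem twoLevel_iff_gale (n : ℕ) (G : Set (Equiv.Perm (Fin n))) (hGfin : G.Finite)
    (hvert : ∀ g ∈ G, permMatrix n g ∈ Set.extremePoints ℝ (permPolytope n G)) :
    IsTwoLevel (permPolytope n G)
      ↔ ∀ J ⊆ G, IsFacet (permPolytope n G) (convexHull ℝ (permMatrix n '' J)) →
          ∀ lam : Equiv.Perm (Fin n) → ℝ,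
            (∑ᶠ g ∈ G, lam g • permMatrix n g) = 0 →
            (∑ᶠ g ∈ G \ J, lam g) = 0 := by
  classical
  obtain ⟨G, rfl⟩ := hGfin.exists_finset_coe
  have hGP : ∀ g ∈ G, permMatrix n g ∈ permPolytope n (G : Set (Equiv.Perm (Fin n))) :=
    fun g hg => (hvert g hg).1
  constructor
  · intro h2 J hJ hF lam hlam
    obtain ⟨J, rfl⟩ := (hGfin.subset hJ).exists_finset_coe
    have hJ' : J ⊆ G := by exact_mod_cast hJ
    rw [finsum_mem_coe_finset] at hlam
    rw [← Finset.coe_sdiff, finsum_mem_coe_finset]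
    obtain ⟨c, α, β, hFc, hc⟩ := h2 _ hF
    -- For `n = 0` the ambient space is trivial, so there is no facet.
    obtain ⟨i⟩ : Nonempty (Fin n) := by
      by_contra hn
      rw [not_nonempty_iff] at hn
      obtain ⟨⟨d, ⟨x, -, y, -, hxy⟩, -⟩, -⟩ := hF
      exact hxy (by rw [Subsingleton.elim x y])
    have hsum := sum_eq_zero_of_sum_smul_permMatrix i G lam hlam
    have hcJ : ∀ g ∈ J, c (permMatrix n g) = α := by
      intro g hg
      have : permMatrix n g ∈ convexHull ℝ (permMatrix n '' (J : Set (Equiv.Perm (Fin n)))) :=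
        subset_convexHull ℝ _ ⟨g, hg, rfl⟩
      rw [hFc] at this
      exact this.2
    -- A vertex of `P(G)` lying in `conv (M '' J)` is a vertex of that hull, hence in `M '' J`.
    have hcK : ∀ g ∈ G \ J, c (permMatrix n g) ≠ α := by
      intro g hg hα
      rw [Finset.mem_sdiff] at hg
      have hmem : permMatrix n g ∈
          convexHull ℝ (permMatrix n '' (J : Set (Equiv.Perm (Fin n)))) := by
        rw [hFc]
        exact ⟨hGP g hg.1, hα⟩
      have hsub : convexHull ℝ (permMatrix n '' (J : Set (Equiv.Perm (Fin n)))) ⊆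
          permPolytope n (G : Set (Equiv.Perm (Fin n))) :=
        convexHull_mono (Set.image_mono hJ)
      obtain ⟨g', hg', he⟩ := extremePoints_convexHull_subset
        (inter_extremePoints_subset_extremePoints_of_subset hsub ⟨hmem, hvert g hg.1⟩)
      exact hg.2 (permMatrix_injective n he ▸ hg')
    rcases (G \ J).eq_empty_or_nonempty with he | ⟨g₀, hg₀⟩
    · simp [he]
    have hcβ : ∀ g ∈ G \ J, c (permMatrix n g) = β := fun g hg =>
      (hc _ (hvert g (Finset.mem_sdiff.1 hg).1)).resolve_left (hcK g hg)
    have hβα : β - α ≠ 0 := sub_ne_zero.2 (hcβ g₀ hg₀ ▸ hcK g₀ hg₀)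
    have hcsum : ∑ g ∈ G, lam g * c (permMatrix n g) = 0 := by
      simpa using congrArg c hlam
    rw [← Finset.sum_sdiff hJ'] at hsum hcsum
    have e1 : ∑ g ∈ G \ J, lam g * c (permMatrix n g) = (∑ g ∈ G \ J, lam g) * β := by
      rw [Finset.sum_mul]
      exact Finset.sum_congr rfl fun g hg => by rw [hcβ g hg]
    have e2 : ∑ g ∈ J, lam g * c (permMatrix n g) = (∑ g ∈ J, lam g) * α := by
      rw [Finset.sum_mul]
      exact Finset.sum_congr rfl fun g hg => by rw [hcJ g hg]
    rw [e1, e2] at hcsum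
    refine (mul_eq_zero.1 ?_).resolve_right hβα
    linear_combination hcsum - α * hsum
  · intro h F hF
    obtain ⟨⟨d, -, hFd⟩, -⟩ := id hF
    let J := G.filter fun g => permMatrix n g ∈ F
    have hFJ : F = convexHull ℝ (permMatrix n '' (J : Set (Equiv.Perm (Fin n)))) := by
      apply subset_antisymm
      · intro x hx
        have hx' := hx
        rw [hFd] at hx'
        refine convexHull_mono ?_ (mem_convexHull_of_le_of_eq d (d x) ?_ hx'.1 rfl)
        · rintro _ ⟨⟨g, hg, rfl⟩, hgx⟩
          refine ⟨g, Finset.mem_coe.2 (Finset.mem_filter.2 ⟨hg, ?_⟩), rfl⟩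
          rw [hFd]
          exact ⟨hGP g hg, fun y hy => hgx ▸ hx'.2 y hy⟩
        · rintro _ ⟨g, hg, rfl⟩
          exact hx'.2 _ (hGP g hg)
      · refine convexHull_min ?_ ?_
        · rintro _ ⟨g, hg, rfl⟩
          exact (Finset.mem_filter.1 hg).2
        · rw [hFd]
          rintro x ⟨hx, hx'⟩ y ⟨hy, hy'⟩ a b ha hb hab
          refine ⟨convex_convexHull ℝ _ hx hy ha hb hab, fun z hz => ?_⟩
          have h1 := mul_le_mul_of_nonneg_left (hx' z hz) ha
          have h2 := mul_le_mul_of_nonneg_left (hy' z hz) hb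
          have h3 : d z = a * d z + b * d z := by rw [← add_mul, hab, one_mul]
          simp only [map_add, map_smul, smul_eq_mul]
          linarith
    have hJG : J ⊆ G := Finset.filter_subset _ _
    have hgale := h J (Finset.coe_subset.2 hJG) (hFJ ▸ hF)
    obtain ⟨c, hc⟩ := exists_functional_of_dependences (permMatrix n) G (G \ J)
      (fun lam hlam => by
        have := hgale lam (by rwa [finsum_mem_coe_finset])
        rwa [← Finset.coe_sdiff, finsum_mem_coe_finset] at this)
    have hcJ : ∀ g ∈ J, c (permMatrix n g) = 0 := fun g hg => by
      rw [hc g (hJG hg), if_neg (by simp [hg])]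
    refine ⟨c, 0, 1, ?_, ?_⟩
    · apply subset_antisymm
      · intro x hx
        refine ⟨(hFd ▸ hx).1, ?_⟩
        rw [hFJ] at hx
        have hker : Convex ℝ (LinearMap.ker c : Set (Matrix (Fin n) (Fin n) ℝ)) :=
          (LinearMap.ker c).convex
        exact convexHull_min (by rintro _ ⟨g, hg, rfl⟩; exact hcJ g hg) hker hx
      · rintro x ⟨hx, hx0⟩
        rw [hFJ]
        -- `F` is the face of `P(G)` where `-c ≤ 0` is attained.
        refine convexHull_mono ?_ (mem_convexHull_of_le_of_eq (-c) 0 ?_ hx (by simp [hx0]))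
        · rintro _ ⟨⟨g, hg, rfl⟩, hg0⟩
          refine ⟨g, ?_, rfl⟩
          by_contra hgJ
          have hgK : g ∈ G \ J := Finset.mem_sdiff.2 ⟨hg, hgJ⟩
          rw [LinearMap.neg_apply, hc g hg, if_pos hgK] at hg0
          norm_num at hg0
        · rintro _ ⟨g, hg, rfl⟩
          rw [LinearMap.neg_apply, hc g hg]
          split_ifs <;> norm_num
    · intro v hv
      obtain ⟨g, hg, rfl⟩ := extremePoints_convexHull_subset hv
      rw [hc g hg]
      split_ifs <;> simp
end

section
/- Let G be a finite set of permutations of Fin m and let H be a finite set of permutations of Fin n. Let Q be the convex hull, in the space of (m+n)×(m+n) real matrices, of the block-diagonal matrices [[M(g), 0], [0, M(h)]] with g ∈ G and h ∈ H (so Q is the permutation polytope P(G × H) of the direct product). Then for every integer t ≥ 0, the number of (m+n)×(m+n) integer matrices lying in tQ equals i(P(G),t) · i(P(H),t). -/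
/-!
The block-diagonal embedding `(A, B) ↦ [[A, 0], [0, B]]` is linear and injective. Linear maps commute
with convex hulls and the convex hull of a product is the product of the convex hulls
(`convexHull_prod`), so the polytope of the direct product is the image of `P(G) × P(H)`. The
embedding also commutes with dilations, and a block-diagonal matrix is integral exactly when both
blocks are. Hence the lattice points of the dilated polytope are in bijection with pairs of lattice
points of the two factors.
-/

open Pointwise

/-- A real matrix all of whose entries are integers. -/
def IsIntegerMatrix {ι κ : Type*} (X : Matrix ι κ ℝ) : Prop :=
  ∀ i j, ∃ z : ℤ, X i j = (z : ℝ)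

/-- `latticePointCount P t` is the number of integer matrices in the dilation `t • P`. -/
noncomputable def latticePointCount {ι : Type*} (P : Set (Matrix ι ι ℝ)) (t : ℕ) : ℕ :=
  {X : Matrix ι ι ℝ | X ∈ (t : ℝ) • P ∧ IsIntegerMatrix X}.ncard

/-- The block-diagonal embedding `(A, B) ↦ [[A, 0], [0, B]]` as a linear map. -/
noncomputable def blockDiag (ι κ : Type*) :
    (Matrix ι ι ℝ × Matrix κ κ ℝ) →ₗ[ℝ] Matrix (ι ⊕ κ) (ι ⊕ κ) ℝ where
  toFun p := Matrix.fromBlocks p.1 0 0 p.2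
  map_add' p q := by simp [Matrix.fromBlocks_add]
  map_smul' c p := by simp [Matrix.fromBlocks_smul]

theorem blockDiag_injective (ι κ : Type*) : Function.Injective (blockDiag ι κ) := by
  rintro ⟨A, B⟩ ⟨A', B'⟩ h
  obtain ⟨h₁, -, -, h₂⟩ := Matrix.fromBlocks_inj.1 h
  exact Prod.ext h₁ h₂

theorem isIntegerMatrix_blockDiag {ι κ : Type*} (p : Matrix ι ι ℝ × Matrix κ κ ℝ) :
    IsIntegerMatrix (blockDiag ι κ p) ↔ IsIntegerMatrix p.1 ∧ IsIntegerMatrix p.2 := by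
  constructor
  · exact fun h => ⟨fun i j => h (.inl i) (.inl j), fun i j => h (.inr i) (.inr j)⟩
  · rintro ⟨h₁, h₂⟩ (i | i) (j | j)
    · exact h₁ i j
    · exact ⟨0, by simp [blockDiag]⟩
    · exact ⟨0, by simp [blockDiag]⟩
    · exact h₂ i j

theorem latticePointCount_blockDiag {ι κ : Type*} (P : Set (Matrix ι ι ℝ))
    (Q : Set (Matrix κ κ ℝ)) (t : ℕ) :
    latticePointCount (blockDiag ι κ '' (P ×ˢ Q)) t
      = latticePointCount P t * latticePointCount Q t := by
  unfold latticePointCount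
  rw [← Set.ncard_prod, ← Set.ncard_image_of_injective _ (blockDiag_injective ι κ)]
  congr 1
  ext X
  rw [← image_smul_set, Set.smul_set_prod]
  constructor
  · rintro ⟨⟨p, hp, rfl⟩, hX⟩
    rw [isIntegerMatrix_blockDiag] at hX
    exact ⟨p, ⟨⟨hp.1, hX.1⟩, ⟨hp.2, hX.2⟩⟩, rfl⟩
  · rintro ⟨p, ⟨⟨hp₁, hi₁⟩, ⟨hp₂, hi₂⟩⟩, rfl⟩
    exact ⟨⟨p, ⟨hp₁, hp₂⟩, rfl⟩, (isIntegerMatrix_blockDiag p).2 ⟨hi₁, hi₂⟩⟩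

/-- The Ehrhart counting function of the permutation polytope `P(G × H)` of a direct
product is the product of the Ehrhart counting functions:
`i(P(G × H), t) = i(P(G), t) · i(P(H), t)`. -/
theorem ehrhart_directProduct (m n : ℕ)
    (G : Set (Equiv.Perm (Fin m))) (H : Set (Equiv.Perm (Fin n)))
    (hGfin : G.Finite) (hHfin : H.Finite) (t : ℕ) :
    latticePointCount
        (convexHull ℝ
          {X : Matrix (Fin m ⊕ Fin n) (Fin m ⊕ Fin n) ℝ |
            ∃ g ∈ G, ∃ h ∈ H,
              X = Matrix.fromBlocks (permMatrix m g) 0 0 (permMatrix n h)}) t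
      = latticePointCount (permPolytope m G) t * latticePointCount (permPolytope n H) t := by
  have hV : {X : Matrix (Fin m ⊕ Fin n) (Fin m ⊕ Fin n) ℝ |
      ∃ g ∈ G, ∃ h ∈ H, X = Matrix.fromBlocks (permMatrix m g) 0 0 (permMatrix n h)}
      = blockDiag (Fin m) (Fin n) '' ((permMatrix m '' G) ×ˢ (permMatrix n '' H)) := by
    ext X
    constructor
    · rintro ⟨g, hg, h, hh, rfl⟩
      exact ⟨(permMatrix m g, permMatrix n h), ⟨⟨g, hg, rfl⟩, ⟨h, hh, rfl⟩⟩, rfl⟩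
    · rintro ⟨⟨_, _⟩, ⟨⟨g, hg, rfl⟩, ⟨h, hh, rfl⟩⟩, rfl⟩
      exact ⟨g, hg, h, hh, rfl⟩
  rw [hV, ← LinearMap.image_convexHull, convexHull_prod]
  exact latticePointCount_blockDiag _ _ t
end

section
/- For every integer n ≥ 8, there exist a linear functional c on n×n real matrices and a real number α such that {x ∈ P(A_n) : c(x) = α} is a facet of P(A_n) and c takes at least ⌊n/4⌋ + 1 distinct values on the vertex set {M(σ) : σ ∈ A_n}; that is, P(A_n) is at least (⌊n/4⌋ + 1)-level. -/
open Equiv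

/-! ### The weights and their maximisers -/

section Weight

variable {ι : Type*} [DecidableEq ι]

/-- The weight matrix `χ` of the facet functional attached to two points `a`, `b`. -/
noncomputable def facetWeight (a b i j : ι) : ℝ :=
  if i = a then (if j = a ∨ j = b then 0 else 1)
  else if i = b then 0
  else if j = i ∨ j = a then 0 else -1

theorem facetWeight_self (a b i : ι) : facetWeight a b i i = 0 := by
  unfold facetWeight; split_ifs <;> simp_all

variable [Fintype ι]

theorem sum_threeCycle (ψ : ι → ι → ℝ) (hd : ∀ i, ψ i i = 0) {x y z : ι}
    (hxy : x ≠ y) (hyz : y ≠ z) (hxz : x ≠ z) :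
    ∑ i, ψ i ((swap x y * swap y z) i) = ψ x y + ψ y z + ψ z x := by
  rw [← Finset.sum_subset (Finset.subset_univ {x, y, z})]
  · rw [Finset.sum_insert (by simp [hxy, hxz]), Finset.sum_insert (by simp [hyz]),
      Finset.sum_singleton]
    simp [swap_apply_of_ne_of_ne, hxy, hxz, hxz.symm, hyz.symm, add_assoc]
  · intro i _ hi
    simp only [Finset.mem_insert, Finset.mem_singleton, not_or] at hi
    simp [swap_apply_of_ne_of_ne, hi, hd]

theorem sum_doubleSwap (ψ : ι → ι → ℝ) (hd : ∀ i, ψ i i = 0) {x y z w : ι}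
    (hxy : x ≠ y) (hxz : x ≠ z) (hxw : x ≠ w) (hyz : y ≠ z) (hyw : y ≠ w) (hzw : z ≠ w) :
    ∑ i, ψ i ((swap x y * swap z w) i) = ψ x y + ψ y x + ψ z w + ψ w z := by
  rw [← Finset.sum_subset (Finset.subset_univ {x, y, z, w})]
  · rw [Finset.sum_insert (by simp [hxy, hxz, hxw]), Finset.sum_insert (by simp [hyz, hyw]),
      Finset.sum_insert (by simp [hzw]), Finset.sum_singleton]
    simp [swap_apply_of_ne_of_ne, hxz, hxw, hyz, hyw, hxz.symm, hyz.symm, hxw.symm,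
      hyw.symm, add_assoc]
  · intro i _ hi
    simp only [Finset.mem_insert, Finset.mem_singleton, not_or] at hi
    simp [swap_apply_of_ne_of_ne, hi, hd]

theorem swap_mul_swap_mem_alternatingGroup {x y z w : ι} (hxy : x ≠ y) (hzw : z ≠ w) :
    swap x y * swap z w ∈ alternatingGroup ι := by
  simp [Perm.mem_alternatingGroup, Perm.sign_swap hxy, Perm.sign_swap hzw]

/-- The functional with weights `χ` is nonpositive on even permutations: if the entry at
`(a, g a)` contributes `1` and no row contributes `-1`, then `g = swap a (g a)` is odd. -/
theorem sum_facetWeight_nonpos {a b : ι} (hab : a ≠ b) {g : Perm ι}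
    (hg : g ∈ alternatingGroup ι) : ∑ i, facetWeight a b i (g i) ≤ 0 := by
  have hle : ∀ i, i ≠ a → facetWeight a b i (g i) ≤ 0 := by
    intro i hi
    unfold facetWeight
    split_ifs <;> simp_all
  by_cases ha : g a = a ∨ g a = b
  · refine Finset.sum_nonpos fun i _ => ?_
    by_cases hi : i = a
    · simp [facetWeight, hi, ha]
    · exact hle i hi
  · have hex : ∃ k, k ≠ a ∧ k ≠ b ∧ g k ≠ k ∧ g k ≠ a := by
      by_contra! hno
      push Not at ha
      have hj : g (g a) = a :=
        hno (g a) ha.1 ha.2 (fun h => ha.1 (g.injective h))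
      have hfix : ∀ k, k ≠ a → k ≠ b → k ≠ g a → g k = k := by
        intro k h1 h2 h3
        by_contra h4
        exact h3 (g.injective ((hno k h1 h2 h4).trans hj.symm))
      have hb : g b = b := by
        by_contra hb
        by_cases h1 : g b = a
        · exact ha.2 (g.injective (hj.trans h1.symm))
        by_cases h2 : g b = g a
        · exact hab (g.injective h2).symm
        exact hb (g.injective (hfix _ h1 hb h2))
      have hswap : g = swap a (g a) := by
        ext k
        by_cases h1 : k = a
        · simp [h1]
        by_cases h3 : k = g a
        · rw [h3, swap_apply_right, hj]
        rw [swap_apply_of_ne_of_ne h1 h3]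
        by_cases h2 : k = b
        · rw [h2, hb]
        · exact hfix k h1 h2 h3
      rw [Perm.mem_alternatingGroup, hswap, Perm.sign_swap ha.1.symm] at hg
      exact absurd hg (by decide)
    obtain ⟨k, hka, hkb, hkk, hk⟩ := hex
    rw [← Finset.add_sum_erase _ _ (Finset.mem_univ a),
      ← Finset.add_sum_erase _ _ (Finset.mem_erase.2 ⟨hka, Finset.mem_univ k⟩)]
    have h1 : facetWeight a b a (g a) = 1 := by simp [facetWeight, ha]
    have h2 : facetWeight a b k (g k) = -1 := by simp [facetWeight, hka, hkb, hkk, hk]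
    have h3 : ∑ i ∈ (Finset.univ.erase a).erase k, facetWeight a b i (g i) ≤ 0 :=
      Finset.sum_nonpos fun i hi => hle i (by simp at hi; exact hi.2)
    linarith

/-- A weight matrix, normalised to vanish on the diagonal and on row `b`, whose functional
vanishes on all even permutations where that of `χ` does, is a multiple of `χ`. The two extra
points `p ≠ q` are needed for the double transpositions `(a p)(b q)` and `(a q)(b p)`, which
force `ψ a b = 0`. -/
theorem eq_mul_facetWeight {a b p q : ι} (hab : a ≠ b) (hpa : p ≠ a) (hpb : p ≠ b)
    (hqa : q ≠ a) (hqb : q ≠ b) (hpq : p ≠ q)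
    (ψ : ι → ι → ℝ) (hd : ∀ i, ψ i i = 0) (hb : ∀ j, ψ b j = 0)
    (h : ∀ g ∈ alternatingGroup ι, ∑ i, facetWeight a b i (g i) = 0 → ∑ i, ψ i (g i) = 0) :
    ∀ i j, ψ i j = ψ a p * facetWeight a b i j := by
  have e1 : ∀ j, j ≠ a → j ≠ b → ψ j a = - ψ a b := by
    intro j ja jb
    have := h _ (swap_mul_swap_mem_alternatingGroup hab jb.symm)
    rw [sum_threeCycle _ (facetWeight_self a b) hab jb.symm ja.symm,
      sum_threeCycle _ hd hab jb.symm ja.symm] at this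
    have := this (by simp [facetWeight, hab.symm, ja, jb])
    linarith [hb j]
  have e2 : ∀ j, j ≠ a → j ≠ b → ψ j b = - ψ a j := by
    intro j ja jb
    have := h _ (swap_mul_swap_mem_alternatingGroup ja.symm jb)
    rw [sum_threeCycle _ (facetWeight_self a b) ja.symm jb hab,
      sum_threeCycle _ hd ja.symm jb hab] at this
    have := this (by simp [facetWeight, hab.symm, ja, jb, jb.symm])
    linarith [hb a]
  have e3 : ∀ j k, j ≠ a → j ≠ b → k ≠ a → k ≠ b → j ≠ k → ψ a j + ψ j a + ψ k b = 0 := by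
    intro j k ja jb ka kb jk
    have := h _ (swap_mul_swap_mem_alternatingGroup ja.symm kb.symm)
    rw [sum_doubleSwap _ (facetWeight_self a b) ja.symm hab ka.symm jb jk kb.symm,
      sum_doubleSwap _ hd ja.symm hab ka.symm jb jk kb.symm] at this
    have := this (by simp [facetWeight, hab.symm, ja, jb, ka, kb, kb.symm])
    linarith [hb k]
  have e4 : ∀ j k, j ≠ a → j ≠ b → k ≠ a → k ≠ b → j ≠ k → ψ a j + ψ j k + ψ k a = 0 := by
    intro j k ja jb ka kb jk
    have := h _ (swap_mul_swap_mem_alternatingGroup ja.symm jk)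
    rw [sum_threeCycle _ (facetWeight_self a b) ja.symm jk ka.symm,
      sum_threeCycle _ hd ja.symm jk ka.symm] at this
    exact this (by simp [facetWeight, ja, jb, ka, kb, jk.symm])
  have hs : ψ a b = 0 := by
    linarith [e3 p q hpa hpb hqa hqb hpq, e3 q p hqa hqb hpa hpb hpq.symm, e1 p hpa hpb,
      e1 q hqa hqb, e2 p hpa hpb, e2 q hqa hqb]
  have ht : ∀ j, j ≠ a → j ≠ b → ψ a j = ψ a p := by
    intro j ja jb
    by_cases hj : j = p
    · rw [hj]
    · linarith [e3 j p ja jb hpa hpb hj, e1 j ja jb, e2 p hpa hpb]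
  intro i j
  by_cases hia : i = a
  · subst hia
    by_cases hja : j = i
    · simp [hja, facetWeight, hd]
    by_cases hjb : j = b
    · simp [hjb, facetWeight, hs]
    simp [facetWeight, hja, hjb, ht j hja hjb]
  by_cases hib : i = b
  · simp [facetWeight, hib, hab.symm, hb]
  by_cases hji : j = i
  · simp [hji, hd, facetWeight_self]
  by_cases hja : j = a
  · simp [hja, facetWeight, hia, hib, e1 i hia hib, hs]
  by_cases hjb : j = b
  · subst hjb
    simp [facetWeight, hia, hib, hji, hja, e2 i hia hib, ht i hia hib]
  · have := e4 i j hia hib hja hjb (Ne.symm hji)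
    have := e1 j hja hjb
    have := ht i hia hib
    simp only [facetWeight, hia, hib, hji, hja, if_false, or_self]
    linarith

end Weight

/-! ### The functional on matrices -/

/-- The linear functional on matrices with weights `χ`. -/
noncomputable def facetFunctional {n : ℕ} (a b : Fin n) : Matrix (Fin n) (Fin n) ℝ →ₗ[ℝ] ℝ :=
  ∑ i, ∑ j, facetWeight a b i j • Matrix.entryLinearMap ℝ ℝ i j

theorem facetFunctional_permMatrix {n : ℕ} (a b : Fin n) (g : Perm (Fin n)) :
    facetFunctional a b (permMatrix n g) = ∑ i, facetWeight a b i (g i) := by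
  simp [facetFunctional, permMatrix]

theorem map_permMatrix {n : ℕ} (f : Matrix (Fin n) (Fin n) ℝ →ₗ[ℝ] ℝ) (g : Perm (Fin n)) :
    f (permMatrix n g) = ∑ i, f (Matrix.single i (g i) 1) := by
  have : permMatrix n g = ∑ i, Matrix.single i (g i) 1 := by
    ext i j
    simp [permMatrix, Matrix.sum_apply, Matrix.single_apply, ite_and]
  rw [this, map_sum]

/-- A functional `f` vanishing on `M(g) - M(1)` for all even `g` on the face is, on the
differences `M(g) - M(1)` of all permutations, a multiple of the facet functional. -/
theorem exists_eq_mul_facetFunctional {n : ℕ} {a b p q : Fin n} (hab : a ≠ b) (hpa : p ≠ a)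
    (hpb : p ≠ b) (hqa : q ≠ a) (hqb : q ≠ b) (hpq : p ≠ q)
    (f : Matrix (Fin n) (Fin n) ℝ →ₗ[ℝ] ℝ)
    (hf : ∀ g ∈ alternatingGroup (Fin n), facetFunctional a b (permMatrix n g) = 0 →
      f (permMatrix n g) = f (permMatrix n 1)) :
    ∃ t : ℝ, ∀ g : Perm (Fin n),
      f (permMatrix n g) - f (permMatrix n 1) = t * facetFunctional a b (permMatrix n g) := by
  -- Row and column corrections normalise the weights of `f`; they change the value on `M(g)` by
  -- an amount independent of `g`.
  let φ : Fin n → Fin n → ℝ := fun i j => f (Matrix.single i j 1)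
  let ψ : Fin n → Fin n → ℝ := fun i j => φ i j - φ i i - φ b j + φ b i
  have hψ : ∀ g : Perm (Fin n), ∑ i, ψ i (g i) = f (permMatrix n g) - f (permMatrix n 1) := by
    intro g
    have := Equiv.sum_comp g (φ b)
    simp only [ψ, Finset.sum_add_distrib, Finset.sum_sub_distrib, this, map_permMatrix]
    simp [φ]
  refine ⟨ψ a p, fun g => ?_⟩
  have key := eq_mul_facetWeight hab hpa hpb hqa hqb hpq ψ (fun i => by simp [ψ])
    (fun j => by simp [ψ]) (fun g hg h0 => by
      rw [hψ, hf g hg (by rw [facetFunctional_permMatrix, h0]), sub_self])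
  rw [← hψ, facetFunctional_permMatrix, Finset.mul_sum]
  exact Finset.sum_congr rfl fun i _ => key _ _

theorem finrank_inf_ker_add_one {E : Type*} [AddCommGroup E] [Module ℝ E] [FiniteDimensional ℝ E]
    (D : Submodule ℝ E) (c : E →ₗ[ℝ] ℝ) {v : E} (hv : v ∈ D) (hc : c v ≠ 0) :
    Module.finrank ℝ (D ⊓ LinearMap.ker c : Submodule ℝ E) + 1 = Module.finrank ℝ D := by
  have h := LinearMap.finrank_range_add_finrank_ker (c.domRestrict D)
  have hr : LinearMap.range (c.domRestrict D) = ⊤ := by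
    apply LinearMap.range_eq_top.2
    apply LinearMap.surjective
    intro h0
    exact hc (by simpa using LinearMap.congr_fun h0 ⟨v, hv⟩)
  have hk : (LinearMap.ker (c.domRestrict D)).map D.subtype = D ⊓ LinearMap.ker c := by
    ext x; simp [and_comm]
  rw [hr, finrank_top, Module.finrank_self] at h
  rw [← hk, Submodule.finrank_map_subtype_eq, ← h, add_comm]

/-! ### Counting values on the vertices -/

/-- The value of the facet functional on the cycle `(0 1 … 2k + 2)`, which fixes `a = n - 1`
and `b = n - 2`: each of the `2k + 3` moved points contributes `-1`. -/
theorem sum_facetWeight_cycleRange {n : ℕ} (a b : Fin n) (ha : a.val + 1 = n)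
    (hb : b.val + 2 = n) (k : ℕ) (i : Fin n) (hi : i.val = 2 * (k + 1)) (hin : i.val + 3 ≤ n) :
    ∑ j, facetWeight a b j (Fin.cycleRange i j) = -(2 * (k : ℝ) + 3) := by
  have hval : ∀ j : Fin n, facetWeight a b j (Fin.cycleRange i j) = if j ≤ i then -1 else 0 := by
    intro j
    rcases lt_trichotomy j i with h | h | h
    · have h1 : (Fin.cycleRange i j).val = j.val + 1 := Fin.coe_cycleRange_of_lt h
      have h2 : j.val < i.val := h
      simp only [facetWeight, Fin.ext_iff, h1]
      rw [if_neg (by omega), if_neg (by omega), if_neg (by omega), if_pos h.le]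
    · subst h
      have h1 : (Fin.cycleRange j j).val = 0 := by
        have : NeZero n := ⟨by omega⟩
        simp
      simp only [facetWeight, Fin.ext_iff, h1]
      rw [if_neg (by omega), if_neg (by omega), if_neg (by omega), if_pos le_rfl]
    · rw [Fin.cycleRange_of_gt h, facetWeight_self, if_neg (not_le.2 h)]
  simp_rw [hval]
  rw [Finset.sum_ite, Finset.sum_const_zero, Finset.sum_const]
  have : (Finset.univ.filter fun j : Fin n => j ≤ i) = Finset.Iic i := by ext; simp
  rw [this, Fin.card_Iic, hi]
  simp; ring

theorem card_values {n : ℕ} (hn : 8 ≤ n) (a b : Fin n) (ha : a.val + 1 = n)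
    (hb : b.val + 2 = n) :
    n / 4 + 1 ≤ (facetFunctional a b '' (permMatrix n ''
      ((alternatingGroup (Fin n)) : Set (Perm (Fin n))))).ncard := by
  classical
  let v : ℕ → ℝ := fun k => if k = 0 then 0 else -(2 * (k : ℝ) + 1)
  have hv : StrictAnti v := by
    refine strictAnti_nat_of_succ_lt fun k => ?_
    rcases k with _ | k
    · simp [v]; norm_num
    · simp only [v, Nat.add_eq_zero_iff, one_ne_zero, and_false, if_false]
      push_cast
      linarith
  have hsub : v '' (Finset.range (n / 4 + 1) : Set ℕ) ⊆ facetFunctional a b '' (permMatrix n ''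
      ((alternatingGroup (Fin n)) : Set (Perm (Fin n)))) := by
    rintro _ ⟨k, hk, rfl⟩
    have hk : k < n / 4 + 1 := by simpa using hk
    rcases k with _ | k
    · refine ⟨_, ⟨1, one_mem _, rfl⟩, ?_⟩
      simp [facetFunctional_permMatrix, facetWeight_self, v]
    · have hlt : 2 * (k + 1) < n := by omega
      refine ⟨_, ⟨Fin.cycleRange ⟨2 * (k + 1), hlt⟩, ?_, rfl⟩, ?_⟩
      · simp [Perm.mem_alternatingGroup, Fin.sign_cycleRange, pow_mul]
      · rw [facetFunctional_permMatrix, sum_facetWeight_cycleRange a b ha hb k _ rfl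
          (by simp only; omega)]
        simp [v]; ring
  calc n / 4 + 1 = (v '' (Finset.range (n / 4 + 1) : Set ℕ)).ncard := by
        rw [Set.ncard_image_of_injective _ hv.injective, Set.ncard_coe_finset, Finset.card_range]
    _ ≤ _ := Set.ncard_le_ncard hsub (((Set.toFinite _).image _).image _)

/-! ### The facet -/

/-- The even permutation `g₀` only certifies that the functional is not constant on the
polytope. -/
theorem isFacet_facetFunctional {n : ℕ} {a b p q : Fin n} (hab : a ≠ b) (hpa : p ≠ a)
    (hpb : p ≠ b) (hqa : q ≠ a) (hqb : q ≠ b) (hpq : p ≠ q) {g₀ : Perm (Fin n)}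
    (hg₀ : g₀ ∈ alternatingGroup (Fin n)) (hc₀ : facetFunctional a b (permMatrix n g₀) ≠ 0) :
    IsFacet (permPolytope n ((alternatingGroup (Fin n)) : Set (Perm (Fin n))))
      {x ∈ permPolytope n ((alternatingGroup (Fin n)) : Set (Perm (Fin n))) |
        facetFunctional a b x = 0} := by
  set P := permPolytope n ((alternatingGroup (Fin n)) : Set (Perm (Fin n))) with hP
  set c := facetFunctional a b with hc
  have hmem : ∀ g ∈ alternatingGroup (Fin n), permMatrix n g ∈ P := fun g hg =>
    subset_convexHull ℝ _ ⟨g, hg, rfl⟩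
  have h1 : c (permMatrix n 1) = 0 := by
    simp [hc, facetFunctional_permMatrix, facetWeight_self]
  have hle : ∀ y ∈ P, c y ≤ 0 := by
    intro y hy
    refine convexHull_min (t := {y | c y ≤ 0}) ?_ (convex_halfSpace_le c.isLinear 0) hy
    rintro _ ⟨g, hg, rfl⟩
    show c _ ≤ 0
    rw [hc, facetFunctional_permMatrix]
    exact sum_facetWeight_nonpos hab hg
  refine ⟨⟨c, ⟨_, hmem g₀ hg₀, _, hmem 1 (one_mem _), by rwa [h1]⟩, ?_⟩, ?_⟩
  · ext x
    refine and_congr_right fun hx => ⟨fun h y hy => (hle y hy).trans h.ge, fun h => ?_⟩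
    exact le_antisymm (hle x hx) (h1 ▸ h _ (hmem 1 (one_mem _)))
  · unfold polytopeDim
    rw [direction_affineSpan, direction_affineSpan]
    have hDP : vectorSpan ℝ P = Submodule.span ℝ
        ((fun g => permMatrix n g - permMatrix n 1) '' (alternatingGroup (Fin n) :
          Set (Perm (Fin n)))) := by
      rw [← direction_affineSpan, hP, permPolytope, affineSpan_convexHull, direction_affineSpan,
        vectorSpan_eq_span_vsub_set_right ℝ
          (Set.mem_image_of_mem (permMatrix n) (one_mem (alternatingGroup (Fin n)))),
        Set.image_image]
      rfl
    have hDF : vectorSpan ℝ {x ∈ P | c x = 0} = vectorSpan ℝ P ⊓ LinearMap.ker c := by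
      apply le_antisymm
      · refine le_inf (vectorSpan_mono ℝ fun x hx => hx.1) ?_
        rw [vectorSpan_def, Submodule.span_le]
        rintro _ ⟨x, hx, y, hy, rfl⟩
        simp [hx.2, hy.2]
      · rintro x ⟨hxP, hxc⟩
        -- Otherwise a functional separates `x` from the direction of the face; on the direction
        -- of `P` it is a multiple of `c`, which vanishes at `x`.
        by_contra hx
        obtain ⟨f, hfx, hf⟩ := Submodule.exists_le_ker_of_notMem hx
        obtain ⟨t, ht⟩ := exists_eq_mul_facetFunctional hab hpa hpb hqa hqb hpq f
          (fun g hg h0 => by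
            have := hf (vsub_mem_vectorSpan ℝ (s := {x ∈ P | c x = 0}) ⟨hmem g hg, h0⟩
              ⟨hmem 1 (one_mem _), h1⟩)
            simpa [sub_eq_zero] using this)
        have hle' : vectorSpan ℝ P ≤ LinearMap.ker (f - t • c) := by
          rw [hDP, Submodule.span_le]
          rintro _ ⟨g, -, rfl⟩
          have := ht g
          simp only [SetLike.mem_coe, LinearMap.mem_ker, LinearMap.sub_apply,
            LinearMap.smul_apply, map_sub, h1, smul_eq_mul]
          linarith
        have := hle' hxP
        simp [LinearMap.mem_ker.1 hxc] at this
        exact hfx this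
    rw [hDF]
    refine finrank_inf_ker_add_one _ c
      (vsub_mem_vectorSpan ℝ (hmem g₀ hg₀) (hmem 1 (one_mem _))) ?_
    simpa [h1] using hc₀

/-- For `n ≥ 8` there are a linear functional `c` and a real `α` such that
`{x ∈ P(A_n) : c x = α}` is a facet of `P(A_n)` and `c` takes at least `⌊n/4⌋ + 1`
distinct values on the vertices `M(σ)`, `σ ∈ A_n`: `P(A_n)` is at least
`(⌊n/4⌋ + 1)`-level. -/
theorem alternating_at_least_level (n : ℕ) (hn : 8 ≤ n) :
    ∃ (c : Matrix (Fin n) (Fin n) ℝ →ₗ[ℝ] ℝ) (α : ℝ),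
      IsFacet
          (permPolytope n ((alternatingGroup (Fin n)) : Set (Equiv.Perm (Fin n))))
          {x ∈ permPolytope n ((alternatingGroup (Fin n)) : Set (Equiv.Perm (Fin n))) |
            c x = α}
      ∧ n / 4 + 1 ≤
          (c '' (permMatrix n ''
            ((alternatingGroup (Fin n)) : Set (Equiv.Perm (Fin n))))).ncard := by
  have ha : n - 1 < n := by omega
  have hb : n - 2 < n := by omega
  have hp : 0 < n := by omega
  have hq : 1 < n := by omega
  have h2 : 2 < n := by omega
  refine ⟨facetFunctional ⟨n - 1, ha⟩ ⟨n - 2, hb⟩, 0, ?_,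
    card_values hn _ _ (by simp only; omega) (by simp only; omega)⟩
  refine isFacet_facetFunctional (p := ⟨0, hp⟩) (q := ⟨1, hq⟩) (g₀ := Fin.cycleRange ⟨2, h2⟩)
    ?_ ?_ ?_ ?_ ?_ ?_ ?_ ?_
  all_goals try (simp only [ne_eq, Fin.mk.injEq]; omega)
  · simp [Perm.mem_alternatingGroup, Fin.sign_cycleRange]
  · rw [facetFunctional_permMatrix, sum_facetWeight_cycleRange _ _ (by simp only; omega)
      (by simp only; omega) 0 _ rfl (by simp only; omega)]
    norm_num
end

section
/- Let h ≥ 1, n ≥ 1 and k ≥ 0 be integers, and let S be a finite set of cardinality hn partitioned into blocks B_1, B_2, …, B_h, each of cardinality n. Then the number of (k+1)-element subsets of S that contain none of the blocks B_2, …, B_h as a subset equals Σ_{ℓ=0}^{h−1} (−1)^ℓ · C(h−1, ℓ) · C((h−ℓ)n, k+1−ℓn) (an identity in ℤ). -/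
/-!
Inclusion-exclusion over the set `I` of indices `i ≠ 0`. The indicator of "`T` contains no `B i`
with `i ∈ I`" is `∏ i ∈ I, (1 - [B i ⊆ T]) = ∑ L ⊆ I, (-1) ^ |L| * [⋃ i ∈ L, B i ⊆ T]`
(`indicator_avoid_eq`). After summing over the `(k + 1)`-subsets `T` of `S` and exchanging sums,
the term of `L` counts the `T` lying above a fixed set of size `|L| * n`, which is a binomial
coefficient (`card_filter_superset`) depending on `L` only through `|L|`; there are
`C(h - 1, ℓ)` sets `L` of size `ℓ`.
-/

/-- The binomial coefficient `C(a, b)` with integer lower index, interpreted as `0`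
when `b < 0`. -/
def chooseZ (a : ℕ) (b : ℤ) : ℤ :=
  if 0 ≤ b then (a.choose b.toNat : ℤ) else 0

/-- Removing `U` puts the `m`-subsets of `S` above `U` in bijection with the
`(m - |U|)`-subsets of `S \ U`. -/
theorem card_filter_superset {α : Type*} [DecidableEq α] (S U : Finset α) (hU : U ⊆ S) (m : ℕ) :
    (((S.powersetCard m).filter (fun T => U ⊆ T)).card : ℤ)
      = chooseZ (S.card - U.card) ((m : ℤ) - (U.card : ℤ)) := by
  unfold chooseZ
  split_ifs with hm
  · have hm' : U.card ≤ m := by omega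
    have hsub : ((m : ℤ) - (U.card : ℤ)).toNat = m - U.card := by omega
    rw [hsub, ← Finset.card_sdiff_of_subset hU, ← Finset.card_powersetCard]
    congr 1
    refine Finset.card_nbij' (fun T => T \ U) (fun T => T ∪ U) ?_ ?_ ?_ ?_
    · intro T hT
      simp only [Finset.coe_filter, Finset.mem_powersetCard, Set.mem_ofPred_eq] at hT
      obtain ⟨⟨hTS, hTc⟩, hUT⟩ := hT
      simp only [Finset.mem_coe, Finset.mem_powersetCard]
      exact ⟨Finset.sdiff_subset_sdiff hTS le_rfl, by
        rw [Finset.card_sdiff_of_subset hUT, hTc]⟩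
    · intro T hT
      simp only [Finset.mem_coe, Finset.mem_powersetCard, Finset.subset_sdiff] at hT
      obtain ⟨⟨hTS, hd⟩, hTc⟩ := hT
      simp only [Finset.coe_filter, Finset.mem_powersetCard, Set.mem_ofPred_eq]
      refine ⟨⟨Finset.union_subset hTS hU, ?_⟩, Finset.subset_union_right⟩
      rw [Finset.card_union_of_disjoint hd]
      omega
    · intro T hT
      simp only [Finset.coe_filter, Set.mem_ofPred_eq] at hT
      exact Finset.sdiff_union_of_subset hT.2
    · intro T hT
      simp only [Finset.mem_coe, Finset.mem_powersetCard, Finset.subset_sdiff] at hT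
      exact Finset.union_sdiff_cancel_right hT.1.2
  · rw [Nat.cast_eq_zero, Finset.card_eq_zero, Finset.filter_eq_empty_iff]
    intro T hT hUT
    have := Finset.card_le_card hUT
    rw [(Finset.mem_powersetCard.1 hT).2] at this
    omega

theorem indicator_avoid_eq {ι α : Type*} [DecidableEq α]
    (I : Finset ι) (B : ι → Finset α) (T : Finset α) :
    (if ∀ i ∈ I, ¬ B i ⊆ T then (1 : ℤ) else 0)
      = ∑ L ∈ I.powerset, (-1 : ℤ) ^ L.card * (if L.biUnion B ⊆ T then 1 else 0) := by
  classical
  have h1 : (if ∀ i ∈ I, ¬ B i ⊆ T then (1 : ℤ) else 0)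
      = ∏ i ∈ I, (1 + -(if B i ⊆ T then (1 : ℤ) else 0)) := by
    rw [← Finset.prod_boole]
    refine Finset.prod_congr rfl fun i _ => ?_
    split_ifs <;> simp_all
  rw [h1, Finset.prod_one_add]
  refine Finset.sum_congr rfl fun L _ => ?_
  rw [Finset.prod_neg, Finset.prod_boole]
  simp only [Finset.biUnion_subset]

/-- Inclusion-exclusion count: if a set `S` of size `hn` is partitioned into `h` blocks
`B_0, …, B_{h−1}` of size `n`, then the number of `(k+1)`-element subsets of `S`
containing none of the blocks `B_1, …, B_{h−1}` equals
`Σ_{ℓ=0}^{h−1} (−1)^ℓ C(h−1, ℓ) C((h−ℓ)n, k+1−ℓn)`. -/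
theorem count_subsets_avoiding_blocks {α : Type*} [DecidableEq α]
    (h n k : ℕ) (hh : 1 ≤ h) (hn : 1 ≤ n)
    (S : Finset α) (B : Fin h → Finset α)
    (hcard : ∀ i, (B i).card = n)
    (hdisj : ∀ i j, i ≠ j → Disjoint (B i) (B j))
    (hunion : S = Finset.univ.biUnion B) :
    (((S.powersetCard (k + 1)).filter
        (fun T => ∀ i : Fin h, (i : ℕ) ≠ 0 → ¬ B i ⊆ T)).card : ℤ)
      = ∑ ℓ ∈ Finset.range h,
          (-1 : ℤ) ^ ℓ * (Nat.choose (h - 1) ℓ : ℤ)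
            * chooseZ ((h - ℓ) * n) ((k : ℤ) + 1 - (ℓ : ℤ) * (n : ℤ)) := by
  have hU : ∀ L : Finset (Fin h), (L.biUnion B).card = L.card * n := fun L => by
    rw [Finset.card_biUnion fun i _ j _ hij => hdisj i j hij]
    simp [hcard]
  have hS : S.card = h * n := by rw [hunion, hU]; simp
  have hI : (Finset.univ.filter fun i : Fin h => (i : ℕ) ≠ 0).card = h - 1 := by
    have : (Finset.univ.filter fun i : Fin h => (i : ℕ) ≠ 0)
        = Finset.univ.erase ⟨0, hh⟩ := by
      ext i
      simp [Fin.ext_iff]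
    rw [this, Finset.card_erase_of_mem (Finset.mem_univ _)]
    simp
  set I := Finset.univ.filter fun i : Fin h => (i : ℕ) ≠ 0 with hIdef
  have hind : ∀ T : Finset α, (if ∀ i : Fin h, (i : ℕ) ≠ 0 → ¬ B i ⊆ T then (1 : ℤ) else 0)
      = ∑ L ∈ I.powerset, (-1 : ℤ) ^ L.card * (if L.biUnion B ⊆ T then 1 else 0) := fun T => by
    rw [← indicator_avoid_eq]
    simp [hIdef]
  have hterm : ∀ L : Finset (Fin h),
      ∑ T ∈ S.powersetCard (k + 1), (-1 : ℤ) ^ L.card * (if L.biUnion B ⊆ T then 1 else 0)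
        = (-1 : ℤ) ^ L.card
          * chooseZ ((h - L.card) * n) ((k : ℤ) + 1 - (L.card : ℤ) * (n : ℤ)) := fun L => by
    have hLS : L.biUnion B ⊆ S := by
      rw [hunion]
      exact Finset.biUnion_subset_biUnion_of_subset_left B (Finset.subset_univ L)
    rw [← Finset.mul_sum, Finset.sum_boole, card_filter_superset S _ hLS, hU, hS, Nat.sub_mul]
    push_cast
    rfl
  rw [← Finset.sum_boole, Finset.sum_congr rfl fun T _ => hind T, Finset.sum_comm,
    Finset.sum_congr rfl fun L _ => hterm L,
    Finset.sum_powerset_apply_card (fun ℓ => (-1 : ℤ) ^ ℓ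
      * chooseZ ((h - ℓ) * n) ((k : ℤ) + 1 - (ℓ : ℤ) * (n : ℤ))), hI, Nat.sub_add_cancel hh]
  refine Finset.sum_congr rfl fun ℓ _ => ?_
  rw [nsmul_eq_mul]
  ring
end
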